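/- Let (B,β) be an endo-module over a commutative ring R and let i ∈ ℤ. The canonical surjections ε⁽ˢ⁾ i : C⁽ˢ⁾ i → H_(i/i−1), together with the natural surjections C⁽ˢ⁾ i → C⁽ˢ⁺¹⁾ i as transition maps, induce an isomorphism colim_s C⁽ˢ⁾ i ≅ H_(i/i−1). -/

import Mathlib

universe u

structure EndoModule (R : Type u) [CommRing R] where
  B : ℤ → Type u
  [addCommGroup : ∀ i, AddCommGroup (B i)]
  [module : ∀ i, Module R (B i)]
  β : ∀ i : ℤ, B i →ₗ[R] B (i + 1)

attribute [instance] EndoModule.addCommGroup EndoModule.module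

namespace EndoModule

variable {R : Type u} [CommRing R]

/-- The derived endo-module: `B⁽¹⁾ i = range (β i) ⊆ B (i+1)`, with
`β⁽¹⁾ i` the restriction of `β (i+1)`. -/
def derive (E : EndoModule R) : EndoModule R where
  B i := LinearMap.range (E.β i)
  β i := (E.β (i + 1)).restrict fun x _ => LinearMap.mem_range_self _ x

/-- `Ck E i` is the cokernel of `β i`, i.e. the module `C (i+1)` of the paper. -/
abbrev Ck (E : EndoModule R) (i : ℤ) :=
  E.B (i + 1) ⧸ LinearMap.range (E.β i)

/-- The differential `δ (i+1) : A (i+1) → C (i+1)`. -/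
def delta (E : EndoModule R) (i : ℤ) :
    LinearMap.ker (E.β (i + 1)) →ₗ[R] E.Ck i :=
  (LinearMap.range (E.β i)).mkQ ∘ₗ (LinearMap.ker (E.β (i + 1))).subtype

/-- The natural surjection `C (i+1) → C⁽¹⁾ (i+1)` induced by `β (i+1)`. -/
def qmap (E : EndoModule R) (i : ℤ) : E.Ck i →ₗ[R] (derive E).Ck i :=
  Submodule.mapQ _ _ ((E.β (i + 1)).rangeRestrict)
    (by
      rintro x ⟨y, rfl⟩
      exact ⟨⟨E.β i y, ⟨y, rfl⟩⟩, rfl⟩)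


/-- A cocone over the direct system `⋯ → B i → B (i+1) → ⋯`. -/
def IsCocone (E : EndoModule R) {H : Type u} [AddCommGroup H] [Module R H]
    (h : ∀ i, E.B i →ₗ[R] H) : Prop :=
  ∀ i x, h (i + 1) (E.β i x) = h i x

/-- `(H, h)` is the colimit `H(B) = colim B i` of the direct system along the maps `β`. -/
def IsColimit (E : EndoModule R) {H : Type u} [AddCommGroup H] [Module R H]
    (h : ∀ i, E.B i →ₗ[R] H) : Prop :=
  IsCocone E h ∧
    ∀ (H' : Type u) [AddCommGroup H'] [Module R H'] (h' : ∀ i, E.B i →ₗ[R] H'),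
      IsCocone E h' → ∃! f : H →ₗ[R] H', ∀ i x, f (h i x) = h' i x


/-- The cocone over the derived endo-module induced by a cocone over `E`
(`h⁽¹⁾ i` is `h (i+1)` restricted to `range (β i) ⊆ B (i+1)`). -/
def deriveCocone (E : EndoModule R) {H : Type u} [AddCommGroup H] [Module R H]
    (h : ∀ i, E.B i →ₗ[R] H) : ∀ i, (derive E).B i →ₗ[R] H :=
  fun i => h (i + 1) ∘ₗ (LinearMap.range (E.β i)).subtype

lemma deriveCocone_isCocone {E : EndoModule R} {H : Type u} [AddCommGroup H] [Module R H]
    {h : ∀ i, E.B i →ₗ[R] H} (hc : IsCocone E h) :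
    IsCocone (derive E) (deriveCocone E h) :=
  fun i x => hc (i + 1) x.val

/-- The cocone over the `s`-th derivative induced by a cocone over `E`. -/
def iterCocone {H : Type u} [AddCommGroup H] [Module R H] :
    (s : ℕ) → (E : EndoModule R) → (h : ∀ i, E.B i →ₗ[R] H) →
      ∀ i, (derive^[s] E).B i →ₗ[R] H
  | 0, _, h => h
  | s + 1, E, h => iterCocone s (derive E) (deriveCocone E h)

lemma iterCocone_isCocone {H : Type u} [AddCommGroup H] [Module R H] :
    ∀ (s : ℕ) (E : EndoModule R) (h : ∀ i, E.B i →ₗ[R] H),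
      IsCocone E h → IsCocone (derive^[s] E) (iterCocone s E h)
  | 0, _, _, hc => hc
  | s + 1, E, h, hc => iterCocone_isCocone s (derive E) _ (deriveCocone_isCocone hc)

lemma range_deriveCocone {E : EndoModule R} {H : Type u} [AddCommGroup H] [Module R H]
    {h : ∀ i, E.B i →ₗ[R] H} (hc : IsCocone E h) (i : ℤ) :
    LinearMap.range (deriveCocone E h i) = LinearMap.range (h i) := by
  apply le_antisymm
  · rintro x ⟨y, rfl⟩
    obtain ⟨z, hz⟩ := y.2
    refine ⟨z, ?_⟩
    show h i z = h (i + 1) y.val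
    rw [← hz, hc i z]
  · rintro x ⟨y, rfl⟩
    exact ⟨⟨E.β i y, ⟨y, rfl⟩⟩, hc i y⟩

lemma range_iterCocone {H : Type u} [AddCommGroup H] [Module R H] :
    ∀ (s : ℕ) (E : EndoModule R) (h : ∀ i, E.B i →ₗ[R] H),
      IsCocone E h → ∀ i, LinearMap.range (iterCocone s E h i) = LinearMap.range (h i)
  | 0, _, _, _, _ => rfl
  | s + 1, E, h, hc, i =>
    (range_iterCocone s (derive E) _ (deriveCocone_isCocone hc) i).trans
      (range_deriveCocone hc i)

lemma iterCocone_comm {H : Type u} [AddCommGroup H] [Module R H] :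
    ∀ (s : ℕ) (E : EndoModule R) (h : ∀ i, E.B i →ₗ[R] H),
      IsCocone E h → ∀ (i : ℤ) (x : (derive^[s] E).B i),
        iterCocone s E h (i + 1) ((derive^[s] E).β i x) = iterCocone s E h i x
  | 0, _, _, hc, i, x => hc i x
  | s + 1, E, h, hc, i, x =>
    iterCocone_comm s (derive E) _ (deriveCocone_isCocone hc) i x

/-- The canonical map `ε⁽ˢ⁾ (i+1) : C⁽ˢ⁾ (i+1) → H / H_(i)` (whose image is
`H_(i+1/i)`), using the identification `H⁽ˢ⁾_(i) = H_(i)` of filtrations. -/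
def epsIter (s : ℕ) (E : EndoModule R) {H : Type u} [AddCommGroup H] [Module R H]
    (h : ∀ i, E.B i →ₗ[R] H) (hc : IsCocone E h) (i : ℤ) :
    (derive^[s] E).Ck i →ₗ[R] H ⧸ LinearMap.range (h i) :=
  Submodule.mapQ _ _ (iterCocone s E h (i + 1))
    (by
      rintro x ⟨y, rfl⟩
      show iterCocone s E h (i + 1) _ ∈ LinearMap.range (h i)
      rw [iterCocone_comm s E h hc i y, ← range_iterCocone s E h hc i]
      exact LinearMap.mem_range_self _ y)

/-- The natural surjection `C⁽ˢ⁾ (i+1) → C⁽ˢ⁺¹⁾ (i+1)`. -/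
def qStep : (s : ℕ) → (E : EndoModule R) → (i : ℤ) →
    ((derive^[s] E).Ck i →ₗ[R] (derive^[s + 1] E).Ck i)
  | 0, E, i => qmap E i
  | s + 1, E, i => qStep s (derive E) i

/-- The composite natural surjection `C (i+1) → C⁽ˢ⁾ (i+1)`. -/
def qIter : (s : ℕ) → (E : EndoModule R) → (i : ℤ) →
    (E.Ck i →ₗ[R] (derive^[s] E).Ck i)
  | 0, _, _ => LinearMap.id
  | s + 1, E, i => qIter s (derive E) i ∘ₗ qmap E i

/-!
For fixed `j`, the kernels of the surjections `B j → B⁽ˢ⁾ j` exhaust the kernel of `B j → H`: an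
element of `B j` vanishes in `H` iff finitely many applications of `β` kill it. Hence
`colim_s B⁽ˢ⁾ j = H_(j)`, and passing to cokernels gives `colim_s C⁽ˢ⁾ (i+1) = H_(i+1) / H_(i)`.
-/

section SequentialColimit

variable {M : ℕ → Type u} [∀ s, AddCommGroup (M s)] [∀ s, Module R (M s)]
  {q : ∀ s, M s →ₗ[R] M (s + 1)} {L : Type u} [AddCommGroup L] [Module R L]
  {ℓ : ∀ s, M s →ₗ[R] L}

/-- `(L, ℓ)` is the colimit of the sequence of modules `M 0 → M 1 → ⋯` with transition maps `q`,
tested against modules in the universe of the `M s`. -/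
def IsSequentialColimit (q : ∀ s, M s →ₗ[R] M (s + 1)) (ℓ : ∀ s, M s →ₗ[R] L) : Prop :=
  (∀ s c, ℓ (s + 1) (q s c) = ℓ s c) ∧
    ∀ (L' : Type u) [AddCommGroup L'] [Module R L'] (ℓ' : ∀ s, M s →ₗ[R] L'),
      (∀ s c, ℓ' (s + 1) (q s c) = ℓ' s c) → ∃! f : L →ₗ[R] L', ∀ s c, f (ℓ s c) = ℓ' s c

lemma range_le_range_zero_of_surjective (hℓ : ∀ s c, ℓ (s + 1) (q s c) = ℓ s c)
    (hq : ∀ s, Function.Surjective (q s)) (s : ℕ) :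
    LinearMap.range (ℓ s) ≤ LinearMap.range (ℓ 0) := by
  induction s with
  | zero => exact le_rfl
  | succ s ih =>
    rintro _ ⟨c, rfl⟩
    obtain ⟨c, rfl⟩ := hq s c
    exact hℓ s c ▸ ih (LinearMap.mem_range_self _ c)

lemma IsSequentialColimit.surjective_zero (hL : IsSequentialColimit q ℓ)
    (hq : ∀ s, Function.Surjective (q s)) : Function.Surjective (ℓ 0) := by
  obtain ⟨_, -, hunique⟩ :=
    hL.2 (L ⧸ LinearMap.range (ℓ 0)) (fun _ => 0) fun _ _ => rfl
  have hmkQ : (LinearMap.range (ℓ 0)).mkQ = 0 :=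
    (hunique _ fun s c => (Submodule.Quotient.mk_eq_zero _).2
      (range_le_range_zero_of_surjective hL.1 hq s ⟨c, rfl⟩)).trans (hunique 0 fun _ _ => rfl).symm
  rw [← LinearMap.range_eq_top, ← Submodule.ker_mkQ (LinearMap.range (ℓ 0)), hmkQ,
    LinearMap.ker_zero]

theorem IsSequentialColimit.exists_linearEquiv (hL : IsSequentialColimit q ℓ)
    (hq : ∀ s, Function.Surjective (q s)) {N : Type u} [AddCommGroup N] [Module R N]
    (g : ∀ s, M s →ₗ[R] N) (hg : ∀ s c, g (s + 1) (q s c) = g s c)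
    (hsurj : Function.Surjective (g 0)) (hker : LinearMap.ker (g 0) ≤ LinearMap.ker (ℓ 0)) :
    ∃ e : L ≃ₗ[R] N, ∀ s c, e (ℓ s c) = g s c := by
  obtain ⟨f, hf, -⟩ := hL.2 N g hg
  refine ⟨LinearEquiv.ofBijective f ⟨?injective, ?surjective⟩, hf⟩
  case injective =>
    refine (injective_iff_map_eq_zero f).2 fun l hl => ?_
    obtain ⟨c, rfl⟩ := hL.surjective_zero hq l
    exact hker ((hf 0 c).symm.trans hl)
  case surjective =>
    intro n
    obtain ⟨c, rfl⟩ := hsurj n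
    exact ⟨ℓ 0 c, hf 0 c⟩

end SequentialColimit

section Transition

variable (E : EndoModule R)

/-- The composite `B i → B (i+1) → ⋯ → B j` of the structure maps, which presents an endo-module
as a directed system indexed by `ℤ`. -/
def transition (i j : ℤ) (hij : i ≤ j) : E.B i →ₗ[R] E.B j :=
  Int.leInduction (motive := fun k _ => E.B i →ₗ[R] E.B k) LinearMap.id
    (fun k _ f => E.β k ∘ₗ f) j hij

lemma transition_self (i : ℤ) : E.transition i i le_rfl = LinearMap.id :=
  Int.leInduction_base ..

lemma transition_add_one (i j : ℤ) (hij : i ≤ j) :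
    E.transition i (j + 1) (Int.le_add_one hij) = E.β j ∘ₗ E.transition i j hij :=
  Int.leInduction_add_one ..

instance directedSystem_transition :
    DirectedSystem E.B fun i j hij => E.transition i j hij where
  map_self i x := by rw [transition_self, LinearMap.id_apply]
  map_map k j i hij hjk x := by
    induction k, hjk using Int.leInduction with
    | base => rw [transition_self, LinearMap.id_apply]
    | succ k hjk ih =>
      rw [transition_add_one _ j k hjk, transition_add_one _ i k (hij.trans hjk),
        LinearMap.comp_apply, LinearMap.comp_apply, ih]

lemma isCocone_directLimit_of :
    IsCocone E (Module.DirectLimit.of R ℤ E.B fun i j hij => E.transition i j hij) := by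
  intro i x
  have hβ : E.transition i (i + 1) (Int.le_add_one le_rfl) x = E.β i x := by
    rw [transition_add_one _ i i le_rfl, transition_self, LinearMap.comp_id]
  rw [← hβ, Module.DirectLimit.of_f]

variable {E} {H : Type u} [AddCommGroup H] [Module R H] {h : ∀ i, E.B i →ₗ[R] H}

theorem IsColimit.exists_transition_eq_zero (hcol : IsColimit E h) {j : ℤ} {x : E.B j}
    (hx : h j x = 0) : ∃ k, ∃ hjk : j ≤ k, E.transition j k hjk x = 0 := by
  obtain ⟨f, hf, -⟩ := hcol.2 _ _ E.isCocone_directLimit_of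
  exact Module.DirectLimit.of.zero_exact (by rw [← hf, hx, map_zero])

end Transition

section ToDerived

/-- The composite surjection `B j → B⁽¹⁾ j → ⋯ → B⁽ˢ⁾ j` induced by `β`. Seen inside `B (j+s)`, it
is the `s`-fold application of `β`. -/
def toDerived : (s : ℕ) → (E : EndoModule R) → (j : ℤ) → (E.B j →ₗ[R] (derive^[s] E).B j)
  | 0, _, _ => LinearMap.id
  | s + 1, E, j => toDerived s (derive E) j ∘ₗ (E.β j).rangeRestrict

lemma toDerived_derive_eq_zero : ∀ (s : ℕ) (E : EndoModule R) (j : ℤ) (v : (derive E).B j),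
    toDerived s E (j + 1) v.val = 0 → toDerived s (derive E) j v = 0
  | 0, _, _, _, hv => Subtype.ext hv
  | s + 1, E, j, v, hv =>
    toDerived_derive_eq_zero s (derive E) j (((derive E).β j).rangeRestrict v) hv

variable {E : EndoModule R}

lemma exists_toDerived_eq_zero_of_transition {j k : ℤ} (hjk : j ≤ k) {x : E.B j}
    (hx : ∃ s, toDerived s E k (E.transition j k hjk x) = 0) : ∃ s, toDerived s E j x = 0 := by
  induction k, hjk using Int.leInduction with
  | base => simpa only [transition_self, LinearMap.id_apply] using hx
  | succ k hjk ih =>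
    obtain ⟨s, hs⟩ := hx
    rw [transition_add_one _ j k hjk] at hs
    exact ih ⟨s + 1, toDerived_derive_eq_zero s E k
      ((E.β k).rangeRestrict (E.transition j k hjk x)) hs⟩

variable {H : Type u} [AddCommGroup H] [Module R H] {h : ∀ i, E.B i →ₗ[R] H}

theorem IsColimit.exists_toDerived_eq_zero (hcol : IsColimit E h) {j : ℤ} {x : E.B j}
    (hx : h j x = 0) : ∃ s, toDerived s E j x = 0 := by
  obtain ⟨k, hjk, hk⟩ := hcol.exists_transition_eq_zero hx
  exact exists_toDerived_eq_zero_of_transition hjk ⟨0, hk⟩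

lemma iterCocone_toDerived : ∀ (s : ℕ) {E : EndoModule R} {h : ∀ i, E.B i →ₗ[R] H},
    IsCocone E h → ∀ (j : ℤ) (x : E.B j), iterCocone s E h j (toDerived s E j x) = h j x
  | 0, _, _, _, _, _ => rfl
  | s + 1, E, _, hc, j, x =>
    (iterCocone_toDerived s (deriveCocone_isCocone hc) j ((E.β j).rangeRestrict x)).trans (hc j x)

end ToDerived

section Cokernel

lemma qmap_surjective (E : EndoModule R) (i : ℤ) : Function.Surjective (qmap E i) := by
  intro c
  obtain ⟨⟨_, x, rfl⟩, rfl⟩ := Submodule.Quotient.mk_surjective _ c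
  exact ⟨Submodule.Quotient.mk x, rfl⟩

lemma qIter_surjective : ∀ (s : ℕ) (E : EndoModule R) (i : ℤ), Function.Surjective (qIter s E i)
  | 0, _, _ => Function.surjective_id
  | s + 1, E, i => (qIter_surjective s (derive E) i).comp (qmap_surjective E i)

lemma qStep_surjective : ∀ (s : ℕ) (E : EndoModule R) (i : ℤ), Function.Surjective (qStep s E i)
  | 0, E, i => qmap_surjective E i
  | s + 1, E, i => qStep_surjective s (derive E) i

lemma qStep_qIter : ∀ (s : ℕ) (E : EndoModule R) (i : ℤ) (c : E.Ck i),
    qStep s E i (qIter s E i c) = qIter (s + 1) E i c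
  | 0, _, _, _ => rfl
  | s + 1, E, i, c => qStep_qIter s (derive E) i (qmap E i c)

lemma qIter_mk : ∀ (s : ℕ) (E : EndoModule R) (i : ℤ) (x : E.B (i + 1)),
    qIter s E i (Submodule.Quotient.mk x) = Submodule.Quotient.mk (toDerived s E (i + 1) x)
  | 0, _, _, _ => rfl
  | s + 1, E, i, x => qIter_mk s (derive E) i ((E.β (i + 1)).rangeRestrict x)

variable {E : EndoModule R} {i : ℤ}

lemma apply_qIter {L : Type u} [AddCommGroup L] [Module R L]
    {ℓ : ∀ s : ℕ, (derive^[s] E).Ck i →ₗ[R] L}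
    (hℓ : ∀ (s : ℕ) (c : (derive^[s] E).Ck i), ℓ (s + 1) (qStep s E i c) = ℓ s c)
    (s : ℕ) (c : E.Ck i) : ℓ s (qIter s E i c) = ℓ 0 c := by
  induction s with
  | zero => rfl
  | succ s ih => rw [← qStep_qIter, hℓ, ih]

variable {H : Type u} [AddCommGroup H] [Module R H] {h : ∀ i, E.B i →ₗ[R] H}

lemma epsIter_qIter (hc : IsCocone E h) (s : ℕ) (c : E.Ck i) :
    epsIter s E h hc i (qIter s E i c) = epsIter 0 E h hc i c := by
  obtain ⟨x, rfl⟩ := Submodule.Quotient.mk_surjective _ c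
  rw [qIter_mk]
  exact congrArg Submodule.Quotient.mk (iterCocone_toDerived s hc (i + 1) x)

lemma epsIter_qStep (hc : IsCocone E h) (s : ℕ) (c : (derive^[s] E).Ck i) :
    epsIter (s + 1) E h hc i (qStep s E i c) = epsIter s E h hc i c := by
  obtain ⟨c, rfl⟩ := qIter_surjective s E i c
  rw [qStep_qIter, epsIter_qIter, epsIter_qIter]

lemma range_epsIter (hc : IsCocone E h) (s : ℕ) :
    LinearMap.range (epsIter s E h hc i) =
      Submodule.map (LinearMap.range (h i)).mkQ (LinearMap.range (h (i + 1))) := by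
  rw [epsIter, Submodule.range_mapQ, range_iterCocone s E h hc]

theorem IsColimit.exists_qIter_eq_zero (hcol : IsColimit E h) {c : E.Ck i}
    (hεc : epsIter 0 E h hcol.1 i c = 0) : ∃ s, qIter s E i c = 0 := by
  obtain ⟨x, rfl⟩ := Submodule.Quotient.mk_surjective _ c
  obtain ⟨y, hy⟩ : h (i + 1) x ∈ LinearMap.range (h i) := (Submodule.Quotient.mk_eq_zero _).1 hεc
  have hker : h (i + 1) (x - E.β i y) = 0 := by rw [map_sub, hcol.1, hy, sub_self]
  obtain ⟨s, hs⟩ := hcol.exists_toDerived_eq_zero hker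
  have hmk : (Submodule.Quotient.mk x : E.Ck i) = Submodule.Quotient.mk (x - E.β i y) :=
    (Submodule.Quotient.eq _).2 ⟨y, (sub_sub_cancel x _).symm⟩
  exact ⟨s, by rw [hmk, qIter_mk, hs, Submodule.Quotient.mk_zero]⟩

end Cokernel

/-- The canonical surjections `ε⁽ˢ⁾ (i+1) : C⁽ˢ⁾ (i+1) → H_(i+1/i)`,
together with the natural surjections `C⁽ˢ⁾ (i+1) → C⁽ˢ⁺¹⁾ (i+1)` as transition maps,
induce an isomorphism `colim_s C⁽ˢ⁾ (i+1) ≅ H_(i+1/i)`, where `H_(i+1/i)` is the image of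
`H_(i+1)` in `H/H_(i)`. Here `(L, ℓ)` is any colimit of the sequence of the `C⁽ˢ⁾ (i+1)`. -/
theorem colim_Ck_iso_graded
    {R : Type u} [CommRing R] (E : EndoModule R)
    {H : Type u} [AddCommGroup H] [Module R H]
    (h : ∀ i, E.B i →ₗ[R] H) (hcol : IsColimit E h) (i : ℤ)
    (L : Type u) [AddCommGroup L] [Module R L]
    (ℓ : ∀ s : ℕ, (derive^[s] E).Ck i →ₗ[R] L)
    (hℓ : ∀ (s : ℕ) (c : (derive^[s] E).Ck i), ℓ (s + 1) (qStep s E i c) = ℓ s c)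
    (hL : ∀ (L' : Type u) [AddCommGroup L'] [Module R L']
        (ℓ' : ∀ s : ℕ, (derive^[s] E).Ck i →ₗ[R] L'),
      (∀ (s : ℕ) (c : (derive^[s] E).Ck i), ℓ' (s + 1) (qStep s E i c) = ℓ' s c) →
      ∃! f : L →ₗ[R] L', ∀ s c, f (ℓ s c) = ℓ' s c) :
    ∃ e : L ≃ₗ[R]
        ↥(Submodule.map (LinearMap.range (h i)).mkQ (LinearMap.range (h (i + 1)))),
      ∀ (s : ℕ) (c : (derive^[s] E).Ck i),
        (e (ℓ s c) : H ⧸ LinearMap.range (h i)) = epsIter s E h hcol.1 i c := by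
  have hc : IsCocone E h := hcol.1
  have hmem (s : ℕ) (c : (derive^[s] E).Ck i) : epsIter s E h hc i c ∈
      Submodule.map (LinearMap.range (h i)).mkQ (LinearMap.range (h (i + 1))) :=
    range_epsIter hc s ▸ LinearMap.mem_range_self _ c
  let ε (s : ℕ) := (epsIter s E h hc i).codRestrict _ (hmem s)
  have hsurj : Function.Surjective (ε 0) := by
    rintro ⟨a, ha⟩
    obtain ⟨c, rfl⟩ := (range_epsIter hc 0).ge ha
    exact ⟨c, rfl⟩
  have hker : LinearMap.ker (ε 0) ≤ LinearMap.ker (ℓ 0) := by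
    intro c hεc
    obtain ⟨s, hs⟩ := hcol.exists_qIter_eq_zero (congrArg Subtype.val hεc)
    rw [LinearMap.mem_ker, ← apply_qIter hℓ s c, hs, map_zero]
  have hcolim : IsSequentialColimit (fun s => qStep s E i) ℓ := ⟨hℓ, hL⟩
  obtain ⟨e, he⟩ := hcolim.exists_linearEquiv (fun s => qStep_surjective s E i) ε
    (fun s c => Subtype.ext (epsIter_qStep hc s c)) hsurj hker
  exact ⟨e, fun s c => congrArg Subtype.val (he s c)⟩

end EndoModule
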